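/- Let 1 < p < ∞ and let X be a nontrivial real normed vector space. Let Z = {(x,y) ∈ X × ℝ : |x| ≤ y}, φ((x,y), d) = (x + d, max(y, |x + d|)), and f(x,y) = y^p − (p/(p−1))^p |x|^p. Then the minimal fixed point of A dominating f is given explicitly by A^∞f(x,y) = y^p − (p/(p−1))^p |x|^p if |x| < (p−1)y/p, and A^∞f(x,y) = p y^p − (p²/(p−1)) |x| y^{p−1} if |x| ≥ (p−1)y/p. -/

import Mathlib

/-- An `EReal`-valued function on a real vector space is concave
(with the convention `⊤ + ⊥ = ⊥` of `EReal`). -/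
def IsEConcave {X : Type*} [AddCommGroup X] [Module ℝ X] (ψ : X → EReal) : Prop :=
  ∀ x y : X, ∀ a b : ℝ, 0 ≤ a → 0 ≤ b → a + b = 1 →
    (a : EReal) * ψ x + (b : EReal) * ψ y ≤ ψ (a • x + b • y)

/-- The concave envelope `g^♯` of `g : X → EReal`: the pointwise infimum of all
concave functions dominating `g`. -/
noncomputable def concaveEnvelope {X : Type*} [AddCommGroup X] [Module ℝ X]
    (g : X → EReal) (x : X) : EReal :=
  ⨅ ψ : {ψ : X → EReal // IsEConcave ψ ∧ ∀ y, g y ≤ ψ y}, ψ.1 x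

/-- The operator `A`: `Ag(z) = (g ∘ φ(z,·))^♯(0)`. -/
noncomputable def Aop {X Z : Type*} [AddCommGroup X] [Module ℝ X]
    (φ : Z → X → Z) (g : Z → EReal) : Z → EReal :=
  fun z => concaveEnvelope (fun d => g (φ z d)) 0

/-- The update map of Doob's inequality: `φ((x,y),d) = (x+d, max(y,|x+d|))` on the
state space `Z = {(x,y) : |x| ≤ y}`. -/
noncomputable def doobPhi (X : Type*) [NormedAddCommGroup X] [NormedSpace ℝ X] :
    {z : X × ℝ // ‖z.1‖ ≤ z.2} → X → {z : X × ℝ // ‖z.1‖ ≤ z.2} :=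
  fun z d => ⟨(z.1.1 + d, max z.1.2 ‖z.1.1 + d‖), le_max_right _ _⟩

/-!
`A` preserves increasing suprema, because an increasing supremum of concave functions is concave;
hence `A^∞ f` is the least fixed point of `A` above `f`.

Let `q = p / (p - 1)` and let `T_p(a, b) = a ^ p + p a ^ (p - 1) (b - a)` be the tangent line at `a`
of the convex function `b ↦ b ^ p`. The claimed solution is
`U(x, y) = y ^ p - T_p(min(q|x|, y), q|x|)`. As `T_p(·, b)` increases on `[0, b]`, the concave
function `x ↦ y ^ p - T_p(m, q|x|)` dominates `U(x, max(y, |x|))` for every `m ∈ [0, y]`; taking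
`m = min(q|x|, y)` gives `A U ≤ U`.

Conversely, let `V ≥ f` be a finite fixed point and fix a direction `u`. Let `c` be the infimum of
`V(s u, s) / s ^ p` over `s > 0`. Weighing the move from `(s u, s)` out to radius `(1 + δ) s`
against the move back to radius `(1 + h) s / q`, and letting `δ → 0` and then `h → 0`, gives
`c ≥ -q`. Concavity between `|x| = y / q`, where `f = 0`, and `|x| = y` then yields `V ≥ U`.
-/

open Filter Topology

section ConcaveEnvelope

variable {X Z : Type*} [AddCommGroup X] [Module ℝ X]

lemma coe_mul_iSup {u : ℕ → EReal} (hu : Monotone u) {a : ℝ} (ha : 0 ≤ a) :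
    (a : EReal) * ⨆ n, u n = ⨆ n, (a : EReal) * u n := by
  have hlim : Tendsto (fun n => (a : EReal) * u n) atTop (𝓝 (a * ⨆ n, u n)) :=
    EReal.Tendsto.const_mul (tendsto_atTop_iSup hu) (.inl (EReal.coe_ne_bot a))
      (.inl (EReal.coe_ne_top a))
  have hmono : Monotone fun n => (a : EReal) * u n := fun _ _ hmn =>
    mul_le_mul_of_nonneg_left (hu hmn) (EReal.coe_nonneg.2 ha)
  exact tendsto_nhds_unique hlim (tendsto_atTop_iSup hmono)

lemma iSup_add_iSup_le_iSup_add {u v : ℕ → EReal} (hu : Monotone u) (hv : Monotone v) :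
    (⨆ n, u n) + ⨆ n, v n ≤ ⨆ n, (u n + v n) := by
  refine EReal.add_le_of_forall_lt fun a ha b hb => ?_
  obtain ⟨m, hm⟩ := lt_iSup_iff.1 ha
  obtain ⟨n, hn⟩ := lt_iSup_iff.1 hb
  exact le_iSup_of_le (max m n) (add_le_add (hm.le.trans (hu (le_max_left m n)))
    (hn.le.trans (hv (le_max_right m n))))

lemma IsEConcave.iSup {ψ : ℕ → X → EReal} (hmono : Monotone ψ) (hψ : ∀ n, IsEConcave (ψ n)) :
    IsEConcave (⨆ n, ψ n) := by
  intro x y a b ha hb hab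
  simp only [iSup_apply]
  have hmono_mul {c : ℝ} (hc : 0 ≤ c) (w : X) : Monotone fun n => (c : EReal) * ψ n w :=
    fun _ _ hmn => mul_le_mul_of_nonneg_left (hmono hmn w) (EReal.coe_nonneg.2 hc)
  calc (a : EReal) * (⨆ n, ψ n x) + b * ⨆ n, ψ n y
      = (⨆ n, (a : EReal) * ψ n x) + ⨆ n, (b : EReal) * ψ n y := by
        rw [coe_mul_iSup (fun _ _ hmn => hmono hmn x) ha,
          coe_mul_iSup (fun _ _ hmn => hmono hmn y) hb]
    _ ≤ ⨆ n, ((a : EReal) * ψ n x + b * ψ n y) :=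
        iSup_add_iSup_le_iSup_add (hmono_mul ha x) (hmono_mul hb y)
    _ ≤ ⨆ n, ψ n (a • x + b • y) := iSup_mono fun n => hψ n x y a b ha hb hab

lemma isEConcave_coe {ψ : X → ℝ} (hψ : ConcaveOn ℝ Set.univ ψ) :
    IsEConcave fun x => (ψ x : EReal) := by
  intro x y a b ha hb hab
  have h : a * ψ x + b * ψ y ≤ ψ (a • x + b • y) :=
    hψ.2 (Set.mem_univ x) (Set.mem_univ y) ha hb hab
  beta_reduce
  exact_mod_cast h

lemma le_concaveEnvelope (g : X → EReal) : g ≤ concaveEnvelope g := fun x =>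
  le_iInf fun ψ => ψ.2.2 x

lemma concaveEnvelope_le {g ψ : X → EReal} (hψ : IsEConcave ψ) (hg : g ≤ ψ) :
    concaveEnvelope g ≤ ψ := fun x =>
  iInf_le (fun ψ : {ψ : X → EReal // IsEConcave ψ ∧ ∀ y, g y ≤ ψ y} => ψ.1 x) ⟨ψ, hψ, hg⟩

lemma isEConcave_concaveEnvelope (g : X → EReal) : IsEConcave (concaveEnvelope g) := by
  intro x y a b ha hb hab
  refine le_iInf fun ψ => le_trans ?_ (ψ.2.1 x y a b ha hb hab)
  exact add_le_add
    (mul_le_mul_of_nonneg_left (concaveEnvelope_le ψ.2.1 ψ.2.2 x) (EReal.coe_nonneg.2 ha))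
    (mul_le_mul_of_nonneg_left (concaveEnvelope_le ψ.2.1 ψ.2.2 y) (EReal.coe_nonneg.2 hb))

lemma mul_add_mul_le_concaveEnvelope (g : X → EReal) (x y : X) {a b : ℝ} (ha : 0 ≤ a) (hb : 0 ≤ b)
    (hab : a + b = 1) :
    (a : EReal) * g x + (b : EReal) * g y ≤ concaveEnvelope g (a • x + b • y) :=
  (add_le_add (mul_le_mul_of_nonneg_left (le_concaveEnvelope g x) (EReal.coe_nonneg.2 ha))
    (mul_le_mul_of_nonneg_left (le_concaveEnvelope g y) (EReal.coe_nonneg.2 hb))).trans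
      (isEConcave_concaveEnvelope g x y a b ha hb hab)

lemma concaveEnvelope_mono : Monotone (concaveEnvelope : (X → EReal) → X → EReal) := fun _ h hgh =>
  concaveEnvelope_le (isEConcave_concaveEnvelope h) (hgh.trans (le_concaveEnvelope h))

lemma concaveEnvelope_iSup_le {g : ℕ → X → EReal} (hg : Monotone g) :
    concaveEnvelope (⨆ n, g n) ≤ ⨆ n, concaveEnvelope (g n) := by
  refine concaveEnvelope_le ?_ (iSup_mono fun n => le_concaveEnvelope (g n))
  exact IsEConcave.iSup (concaveEnvelope_mono.comp hg) fun n => isEConcave_concaveEnvelope (g n)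

lemma Aop_mono (φ : Z → X → Z) : Monotone (Aop φ) := fun _ _ hgh z =>
  concaveEnvelope_mono (fun d => hgh (φ z d)) 0

lemma Aop_iSup_le (φ : Z → X → Z) {g : ℕ → Z → EReal} (hg : Monotone g) :
    Aop φ (⨆ n, g n) ≤ ⨆ n, Aop φ (g n) := by
  intro z
  have hcomp : (fun d => (⨆ n, g n) (φ z d)) = ⨆ n, fun d => g n (φ z d) := by
    ext d
    simp only [iSup_apply]
  rw [Aop, hcomp, iSup_apply]
  exact (concaveEnvelope_iSup_le (fun _ _ hmn d => hg hmn (φ z d)) 0).trans_eq (iSup_apply ..)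

variable {φ : Z → X → Z}

lemma le_Aop (hφ : ∀ z, φ z 0 = z) (g : Z → EReal) : g ≤ Aop φ g := fun z =>
  (congrArg g (hφ z)).ge.trans (le_concaveEnvelope (fun d => g (φ z d)) 0)

theorem isLeast_iSup_iterate_Aop (hφ : ∀ z, φ z 0 = z) (f : Z → EReal) :
    IsLeast {g | f ≤ g ∧ Aop φ g ≤ g} (⨆ n, (Aop φ)^[n] f) := by
  have hmono : Monotone fun n => (Aop φ)^[n] f :=
    (Aop_mono φ).monotone_iterate_of_le_map (le_Aop hφ f)
  refine ⟨⟨le_iSup (fun n => (Aop φ)^[n] f) 0, ?_⟩, ?_⟩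
  · calc Aop φ (⨆ n, (Aop φ)^[n] f) ≤ ⨆ n, Aop φ ((Aop φ)^[n] f) := Aop_iSup_le φ hmono
      _ = ⨆ n, (Aop φ)^[n + 1] f := by simp only [Function.iterate_succ_apply']
      _ = ⨆ n, (Aop φ)^[n] f := hmono.iSup_nat_add 1
  · rintro g ⟨hfg, hg⟩
    refine iSup_le fun n => ?_
    induction n with
    | zero => exact hfg
    | succ n ih =>
      rw [Function.iterate_succ_apply']
      exact (Aop_mono φ ih).trans hg

lemma mul_add_mul_le_of_Aop_le {v : Z → ℝ}
    (hv : Aop φ (fun z => (v z : EReal)) ≤ fun z => (v z : EReal)) (z : Z) {d e : X}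
    {a b : ℝ} (ha : 0 ≤ a) (hb : 0 ≤ b) (h0 : a • d + b • e = 0) :
    a * v (φ z d) + b * v (φ z e) ≤ (a + b) * v z := by
  rcases (add_nonneg ha hb).eq_or_lt with hab | hab
  · obtain ⟨rfl, rfl⟩ := (add_eq_zero_iff_of_nonneg ha hb).1 hab.symm
    simp
  have hcentre : (a / (a + b)) • d + (b / (a + b)) • e = 0 := by
    rw [div_eq_inv_mul, div_eq_inv_mul, mul_smul, mul_smul, ← smul_add, h0, smul_zero]
  have hstep := mul_add_mul_le_concaveEnvelope (fun d => (v (φ z d) : EReal)) d e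
    (div_nonneg ha hab.le) (div_nonneg hb hab.le) (by field_simp)
  rw [hcentre] at hstep
  have hle := hstep.trans (hv z)
  beta_reduce at hle
  have hR : a / (a + b) * v (φ z d) + b / (a + b) * v (φ z e) ≤ v z := by exact_mod_cast hle
  rwa [div_mul_eq_mul_div, div_mul_eq_mul_div, ← add_div, div_le_iff₀' hab] at hR

end ConcaveEnvelope

section RpowTangent

variable {p q : ℝ}

/-- The tangent line of `b ↦ b ^ p` at `a`, evaluated at `b`. -/
noncomputable def rpowTangent (p a b : ℝ) : ℝ := a ^ p + p * a ^ (p - 1) * (b - a)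

lemma rpowTangent_self (p a : ℝ) : rpowTangent p a a = a ^ p := by
  simp only [rpowTangent, sub_self, mul_zero, add_zero]

lemma rpowTangent_le_rpow (hp : 1 ≤ p) {a b : ℝ} (ha : 0 ≤ a) (hb : 0 ≤ b) :
    rpowTangent p a b ≤ b ^ p := by
  have hderiv := Real.hasDerivAt_rpow_const (x := a) (.inr hp)
  unfold rpowTangent
  rcases lt_trichotomy a b with hab | rfl | hba
  · have h := (convexOn_rpow hp).le_slope_of_hasDerivAt ha hb hab hderiv
    rw [slope_def_field, le_div_iff₀ (sub_pos.2 hab)] at h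
    linarith
  · simp
  · have h := (convexOn_rpow hp).slope_le_of_hasDerivAt hb ha hba hderiv
    rw [slope_def_field, div_le_iff₀ (sub_pos.2 hba)] at h
    linarith

lemma rpowTangent_le_rpowTangent (hp : 1 ≤ p) {a b c : ℝ} (ha : 0 ≤ a) (hab : a ≤ b)
    (hbc : b ≤ c) : rpowTangent p a c ≤ rpowTangent p b c := by
  have hslope : p * a ^ (p - 1) * (c - b) ≤ p * b ^ (p - 1) * (c - b) := by gcongr
  calc rpowTangent p a c = rpowTangent p a b + p * a ^ (p - 1) * (c - b) := by
        unfold rpowTangent; ring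
    _ ≤ rpowTangent p b c :=
        add_le_add (rpowTangent_le_rpow hp ha (ha.trans hab)) hslope

lemma rpow_eq_mul_rpow_sub_one (hp : p ≠ 0) {y : ℝ} (hy : 0 ≤ y) : y ^ p = y * y ^ (p - 1) := by
  rw [← Real.rpow_one_add' hy (by simpa), add_sub_cancel]

lemma rpow_sub_rpowTangent_mul (hpq : p.HolderConjugate q) {y : ℝ} (hy : 0 ≤ y) (r : ℝ) :
    y ^ p - rpowTangent p y (q * r) = -q * rpowTangent p y r := by
  unfold rpowTangent
  rw [rpow_eq_mul_rpow_sub_one hpq.ne_zero hy]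
  linear_combination -y * y ^ (p - 1) * hpq.mul_eq_add

end RpowTangent

section DiagonalBound

variable {p q : ℝ}

lemma tendsto_one_add_rpow_sub_one_div (p : ℝ) :
    Tendsto (fun h : ℝ => ((1 + h) ^ p - 1) / h) (𝓝[>] 0) (𝓝 p) := by
  have hderiv : HasDerivAt (fun x : ℝ => x ^ p) p 1 := by
    simpa using Real.hasDerivAt_rpow_const (p := p) (.inl one_ne_zero)
  simpa only [smul_eq_mul, Real.one_rpow, inv_mul_eq_div] using hderiv.tendsto_slope_zero_right

lemma mul_add_le_of_forall_step {c θ k : ℝ}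
    (hstep : ∀ δ, 0 < δ → δ * k + (1 - θ) * (c * (1 + δ) ^ p) ≤ (1 - θ + δ) * c) :
    (1 - θ) * c * p + k ≤ c := by
  have hlim := ((tendsto_one_add_rpow_sub_one_div p).const_mul ((1 - θ) * c)).add_const k
  refine le_of_tendsto hlim ?_
  filter_upwards [self_mem_nhdsWithin] with δ (hδ : 0 < δ)
  rw [← mul_le_mul_iff_right₀ hδ]
  have h := hstep δ hδ
  field_simp
  linarith

lemma neg_le_of_forall_step (hpq : p.HolderConjugate q) {c : ℝ}
    (hstep : ∀ θ δ, 0 ≤ θ → θ < 1 → 0 < δ →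
      δ * (1 - (q * θ) ^ p) + (1 - θ) * (c * (1 + δ) ^ p) ≤ (1 - θ + δ) * c) :
    -q ≤ c := by
  have hq := hpq.symm.pos
  have hp1 := hpq.sub_one_pos
  suffices -p ≤ (p - 1) * c by
    refine le_of_mul_le_mul_left ?_ hp1
    linarith [hpq.sub_one_mul_conj]
  refine le_of_tendsto (tendsto_one_add_rpow_sub_one_div p).neg ?_
  filter_upwards [Ioo_mem_nhdsGT hpq.symm.sub_one_pos] with h ⟨hh, hhq⟩
  have hθ : (1 + h) / q < 1 := (div_lt_one hq).2 (by linarith)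
  have hslope : (1 - (1 + h) / q) * c * p + (1 - (q * ((1 + h) / q)) ^ p) ≤ c :=
    mul_add_le_of_forall_step fun δ hδ => hstep ((1 + h) / q) δ (by positivity) hθ hδ
  rw [mul_div_cancel₀ _ hq.ne'] at hslope
  have hweight : (1 - (1 + h) / q) * p = 1 - (p - 1) * h := by
    field_simp
    linear_combination (1 + h) * hpq.mul_eq_add
  rw [neg_le, le_div_iff₀ hh]
  linear_combination hslope - c * hweight

lemma neg_mul_rpow_le_of_forall_step (hpq : p.HolderConjugate q) {w : ℝ → ℝ} {c₀ : ℝ}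
    (hlow : ∀ s, 0 < s → c₀ * s ^ p ≤ w s)
    (hstep : ∀ s θ δ, 0 < s → 0 ≤ θ → θ < 1 → 0 < δ →
      δ * (s ^ p * (1 - (q * θ) ^ p)) + (1 - θ) * w (s * (1 + δ)) ≤ (1 - θ + δ) * w s)
    {s : ℝ} (hs : 0 < s) : -q * s ^ p ≤ w s := by
  set c := ⨅ s : Set.Ioi (0 : ℝ), w s / (s : ℝ) ^ p
  have hbdd : BddBelow (Set.range fun s : Set.Ioi (0 : ℝ) => w s / (s : ℝ) ^ p) := by
    refine ⟨c₀, ?_⟩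
    rintro _ ⟨⟨s, hs⟩, rfl⟩
    exact (le_div_iff₀ (Real.rpow_pos_of_pos hs p)).2 (hlow s hs)
  have hc {s : ℝ} (hs : 0 < s) : c * s ^ p ≤ w s :=
    (le_div_iff₀ (Real.rpow_pos_of_pos hs p)).1 (ciInf_le hbdd ⟨s, hs⟩)
  suffices -q ≤ c from
    (mul_le_mul_of_nonneg_right this (Real.rpow_nonneg hs.le p)).trans (hc hs)
  refine neg_le_of_forall_step hpq fun θ δ hθ0 hθ1 hδ => ?_
  have hweight : 0 < 1 - θ + δ := by linarith
  rw [← div_le_iff₀' hweight]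
  refine le_ciInf fun ⟨s, (hs : 0 < s)⟩ => ?_
  rw [div_le_div_iff₀ hweight (Real.rpow_pos_of_pos hs p)]
  have hout : (1 - θ) * (c * (s * (1 + δ)) ^ p) ≤ (1 - θ) * w (s * (1 + δ)) :=
    mul_le_mul_of_nonneg_left (hc (by positivity)) (by linarith)
  rw [Real.mul_rpow hs.le (by positivity)] at hout
  linarith [hstep s θ δ hs hθ0 hθ1 hδ]

end DiagonalBound

/-- The state space `Z = {(x, y) : |x| ≤ y}` of Doob's inequality. -/
abbrev DoobState (X : Type*) [NormedAddCommGroup X] := {z : X × ℝ // ‖z.1‖ ≤ z.2}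

section DoobState

variable {X : Type*} [NormedAddCommGroup X]

lemma DoobState.snd_nonneg (z : DoobState X) : 0 ≤ z.1.2 := (norm_nonneg z.1.1).trans z.2

/-- The payoff `f(x, y) = y ^ p - (q|x|) ^ p`; in the application `q = p / (p - 1)`. -/
noncomputable def doobPayoff (p q : ℝ) (z : DoobState X) : ℝ := z.1.2 ^ p - (q * ‖z.1.1‖) ^ p

/-- The value of Doob's problem: the payoff while `q|x| ≤ y`, continued in `|x|` along its tangent
line at `|x| = y / q`. -/
noncomputable def doobValue (p q : ℝ) (z : DoobState X) : ℝ :=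
  z.1.2 ^ p - rpowTangent p (min (q * ‖z.1.1‖) z.1.2) (q * ‖z.1.1‖)

variable {p q : ℝ} {z : DoobState X}

lemma doobValue_of_le (hz : q * ‖z.1.1‖ ≤ z.1.2) : doobValue p q z = doobPayoff p q z := by
  rw [doobValue, doobPayoff, min_eq_left hz, rpowTangent_self]

lemma doobValue_of_ge (hz : z.1.2 ≤ q * ‖z.1.1‖) :
    doobValue p q z = p * z.1.2 ^ (p - 1) * (z.1.2 - q * ‖z.1.1‖) := by
  rw [doobValue, min_eq_right hz, rpowTangent]
  ring

lemma doobPayoff_le_doobValue (hp : 1 ≤ p) (hq : 0 ≤ q) (z : DoobState X) :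
    doobPayoff p q z ≤ doobValue p q z := by
  have hr : 0 ≤ q * ‖z.1.1‖ := by positivity
  exact sub_le_sub_left (rpowTangent_le_rpow hp (le_min hr z.snd_nonneg) hr) _

variable [NormedSpace ℝ X]

lemma doobPhi_zero (z : DoobState X) : doobPhi X z 0 = z := by
  apply Subtype.ext
  simp only [doobPhi, add_zero, max_eq_left z.2]

section UpperBound

lemma doobValue_doobPhi_le (hpq : p.HolderConjugate q) {m : ℝ} (hm : 0 ≤ m) (hmz : m ≤ z.1.2)
    (d : X) :
    doobValue p q (doobPhi X z d) ≤ z.1.2 ^ p - rpowTangent p m (q * ‖z.1.1 + d‖) := by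
  have hp := hpq.lt.le
  have hq := hpq.symm.pos
  have hy := z.snd_nonneg
  simp only [doobValue, doobPhi]
  set r := ‖z.1.1 + d‖
  have hr : 0 ≤ r := norm_nonneg _
  have hqr : r ≤ q * r := le_mul_of_one_le_left hr hpq.symm.lt.le
  rcases le_total r z.1.2 with hry | hyr
  · rw [max_eq_left hry]
    rcases le_total (q * r) z.1.2 with h | h
    · rw [min_eq_left h, rpowTangent_self]
      exact sub_le_sub_left (rpowTangent_le_rpow hp hm (by positivity)) _
    · rw [min_eq_right h]
      exact sub_le_sub_left (rpowTangent_le_rpowTangent hp hm hmz h) _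
  · rw [max_eq_right hyr, min_eq_right hqr]
    calc r ^ p - rpowTangent p r (q * r) = -q * r ^ p := by
          rw [rpow_sub_rpowTangent_mul hpq hr, rpowTangent_self]
      _ ≤ -q * rpowTangent p z.1.2 r :=
          mul_le_mul_of_nonpos_left (rpowTangent_le_rpow hp hy hr) (by linarith)
      _ = z.1.2 ^ p - rpowTangent p z.1.2 (q * r) := (rpow_sub_rpowTangent_mul hpq hy r).symm
      _ ≤ z.1.2 ^ p - rpowTangent p m (q * r) :=
          sub_le_sub_left (rpowTangent_le_rpowTangent hp hm hmz (hyr.trans hqr)) _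

lemma concaveOn_sub_rpowTangent_mul_norm (hp : 0 ≤ p) (hq : 0 ≤ q) {m : ℝ} (hm : 0 ≤ m) (c : ℝ)
    (x : X) : ConcaveOn ℝ Set.univ fun d => c - rpowTangent p m (q * ‖x + d‖) := by
  have hnorm : ConvexOn ℝ Set.univ fun d : X => ‖x + d‖ := by
    simpa using! (convexOn_univ_norm (E := X)).translate_right x
  have hslope : 0 ≤ p * m ^ (p - 1) * q := by positivity
  convert! (concaveOn_const (c - m ^ p + p * m ^ (p - 1) * m) convex_univ).sub
    (hnorm.smul hslope) using 2 with d
  simp only [rpowTangent, Pi.sub_apply, smul_eq_mul]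
  ring

theorem Aop_doobValue_le (hpq : p.HolderConjugate q) :
    Aop (doobPhi X) (fun z => (doobValue p q z : EReal)) ≤ fun z => (doobValue p q z : EReal) := by
  intro z
  have hq := hpq.symm.nonneg
  have hm : 0 ≤ min (q * ‖z.1.1‖) z.1.2 := le_min (by positivity) (DoobState.snd_nonneg z)
  have hdom := concaveEnvelope_le
    (isEConcave_coe (concaveOn_sub_rpowTangent_mul_norm hpq.nonneg hq hm (z.1.2 ^ p) z.1.1))
    (fun d => EReal.coe_le_coe (doobValue_doobPhi_le hpq hm (min_le_right _ _) d)) 0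
  simpa only [add_zero] using! hdom

end UpperBound

section LowerBound

/-- The state with position `r • u` and maximum `y`, or `‖r • u‖` should that exceed `y`. -/
noncomputable def doobRay (u : X) (y r : ℝ) : DoobState X :=
  ⟨(r • u, max y ‖r • u‖), le_max_right _ _⟩

variable {u : X} {v : DoobState X → ℝ}

lemma doobRay_of_le (hu : ‖u‖ = 1) {y r : ℝ} (hr : 0 ≤ r) (hyr : y ≤ r) :
    doobRay u y r = doobRay u r r := by
  apply Subtype.ext
  simp [doobRay, norm_smul, hu, abs_of_nonneg hr, hyr]

lemma doobPayoff_doobRay (hu : ‖u‖ = 1) {y r : ℝ} (hr : 0 ≤ r) (hry : r ≤ y) :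
    doobPayoff p q (doobRay u y r) = y ^ p - (q * r) ^ p := by
  simp [doobPayoff, doobRay, norm_smul, hu, abs_of_nonneg hr, hry]

lemma doobPhi_doobRay (hu : ‖u‖ = 1) {y r : ℝ} (hr : 0 ≤ r) (hry : r ≤ y) (s : ℝ) :
    doobPhi X (doobRay u y r) ((s - r) • u) = doobRay u y s := by
  apply Subtype.ext
  have hmax : max y ‖r • u‖ = y := max_eq_left (by simpa [norm_smul, hu, abs_of_nonneg hr])
  simp only [doobPhi, doobRay, hmax, ← add_smul, add_sub_cancel]

lemma exists_eq_doobRay (z : DoobState X) (hz : z.1.1 ≠ 0) :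
    ∃ u : X, ‖u‖ = 1 ∧ z = doobRay u z.1.2 ‖z.1.1‖ := by
  refine ⟨‖z.1.1‖⁻¹ • z.1.1, norm_smul_inv_norm hz, Subtype.ext ?_⟩
  simp only [doobRay, smul_inv_smul₀ (norm_ne_zero_iff.2 hz), max_eq_left z.2]

lemma doobRay_secant_le
    (hv : Aop (doobPhi X) (fun z => (v z : EReal)) ≤ fun z => (v z : EReal)) (hu : ‖u‖ = 1)
    {y s r t : ℝ} (hr : 0 ≤ r) (hry : r ≤ y) (hsr : s ≤ r) (hrt : r ≤ t) :
    (t - r) * v (doobRay u y s) + (r - s) * v (doobRay u y t) ≤ (t - s) * v (doobRay u y r) := by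
  have h := mul_add_mul_le_of_Aop_le hv (doobRay u y r) (sub_nonneg.2 hrt) (sub_nonneg.2 hsr)
    (d := (s - r) • u) (e := (t - r) • u) (by module)
  rwa [doobPhi_doobRay hu hr hry, doobPhi_doobRay hu hr hry, sub_add_sub_cancel] at h

lemma neg_mul_rpow_le_doobRay (hpq : p.HolderConjugate q) (hf : ∀ z, doobPayoff p q z ≤ v z)
    (hv : Aop (doobPhi X) (fun z => (v z : EReal)) ≤ fun z => (v z : EReal)) (hu : ‖u‖ = 1)
    {s : ℝ} (hs : 0 < s) : -q * s ^ p ≤ v (doobRay u s s) := by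
  have hq := hpq.symm.nonneg
  refine neg_mul_rpow_le_of_forall_step hpq (w := fun s => v (doobRay u s s)) (c₀ := 1 - q ^ p)
    (fun s hs => ?_) (fun s θ δ hs hθ0 hθ1 hδ => ?_) hs
  · calc (1 - q ^ p) * s ^ p = doobPayoff p q (doobRay u s s) := by
          rw [doobPayoff_doobRay hu hs.le le_rfl, Real.mul_rpow hq hs.le]
          ring
      _ ≤ v (doobRay u s s) := hf _
  · have hback : s ^ p * (1 - (q * θ) ^ p) ≤ v (doobRay u s (s * θ)) := by
      refine le_of_eq_of_le ?_ (hf _)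
      rw [doobPayoff_doobRay hu (by positivity) (mul_le_of_le_one_right hs.le hθ1.le),
        mul_left_comm, Real.mul_rpow hs.le (by positivity)]
      ring
    have hout : s ≤ s * (1 + δ) := le_mul_of_one_le_right hs.le (by linarith)
    have hsecant := doobRay_secant_le hv hu hs.le le_rfl
      (mul_le_of_le_one_right hs.le hθ1.le) hout
    rw [doobRay_of_le hu (by positivity) hout] at hsecant
    have hscaled := mul_le_mul_of_nonneg_left hback hδ.le
    refine le_of_mul_le_mul_left ?_ hs
    linear_combination hsecant + s * hscaled

theorem doobValue_le_of_Aop_le (hpq : p.HolderConjugate q) (hf : ∀ z, doobPayoff p q z ≤ v z)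
    (hv : Aop (doobPhi X) (fun z => (v z : EReal)) ≤ fun z => (v z : EReal)) (z : DoobState X) :
    doobValue p q z ≤ v z := by
  have hq := hpq.symm.pos
  have hp := hpq.pos
  rcases le_or_gt (q * ‖z.1.1‖) z.1.2 with hz | hz
  · exact (doobValue_of_le hz).trans_le (hf z)
  have hr : 0 < ‖z.1.1‖ := pos_of_mul_pos_right (z.snd_nonneg.trans_lt hz) hq.le
  have hy : 0 < z.1.2 := hr.trans_le z.2
  obtain ⟨u, hu, hzu⟩ := exists_eq_doobRay z (norm_pos_iff.1 hr)
  rw [doobValue_of_ge hz.le]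
  have hryle := z.2
  set y := z.1.2
  set r := ‖z.1.1‖
  rw [hzu]
  have hinner : 0 ≤ v (doobRay u y (y / q)) := by
    refine le_of_eq_of_le ?_ (hf _)
    rw [doobPayoff_doobRay hu (by positivity) (div_le_self hy.le hpq.symm.lt.le),
      mul_div_cancel₀ _ hq.ne', sub_self]
  have hdiag := neg_mul_rpow_le_doobRay hpq hf hv hu hy
  have hyq : y / q ≤ r := (div_le_iff₀' hq).2 hz.le
  have hgap : y - y / q = y / p := by
    rw [div_eq_mul_inv, ← mul_one_sub, hpq.symm.one_sub_inv, div_eq_mul_inv]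
  refine le_of_mul_le_mul_left ?_ (hgap ▸ div_pos hy hp : 0 < y - y / q)
  calc (y - y / q) * (p * y ^ (p - 1) * (y - q * r))
      = (y - r) * 0 + (r - y / q) * (-q * y ^ p) := by
        rw [hgap, rpow_eq_mul_rpow_sub_one hpq.ne_zero hy.le]
        field_simp
        ring
    _ ≤ (y - r) * v (doobRay u y (y / q)) + (r - y / q) * v (doobRay u y y) := by
        gcongr
    _ ≤ (y - y / q) * v (doobRay u y r) := doobRay_secant_le hv hu hr.le hryle hyq hryle

end LowerBound

theorem iSup_iterate_Aop_doobPayoff (hpq : p.HolderConjugate q) :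
    ⨆ n, (Aop (doobPhi X))^[n] (fun z => (doobPayoff p q z : EReal))
      = fun z => (doobValue p q z : EReal) := by
  obtain ⟨⟨hfV, hV⟩, hleast⟩ :=
    isLeast_iSup_iterate_Aop doobPhi_zero fun z : DoobState X => (doobPayoff p q z : EReal)
  set V := ⨆ n, (Aop (doobPhi X))^[n] fun z => (doobPayoff p q z : EReal)
  have hVU : V ≤ fun z => (doobValue p q z : EReal) := hleast
    ⟨fun z => EReal.coe_le_coe (doobPayoff_le_doobValue hpq.lt.le hpq.symm.nonneg z),
      Aop_doobValue_le hpq⟩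
  have hVreal (z : DoobState X) : V z ≠ ⊤ ∧ V z ≠ ⊥ :=
    ⟨ne_top_of_le_ne_top (EReal.coe_ne_top _) (hVU z),
      ne_bot_of_le_ne_bot (EReal.coe_ne_bot _) (hfV z)⟩
  refine le_antisymm hVU fun z => ?_
  lift V to DoobState X → ℝ using hVreal with v
  exact EReal.coe_le_coe (doobValue_le_of_Aop_le hpq (fun z => EReal.coe_le_coe_iff.1 (hfV z)) hV z)

end DoobState

/-- For `1 < p < ∞` and `f(x,y) = y^p - (p/(p-1))^p |x|^p` on
`Z = {|x| ≤ y}`, the minimal fixed point of `A` dominating `f` (i.e. `A^∞f = lim_n Aⁿf`)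
is `f(x,y)` for `|x| < (p-1)y/p` and `p y^p - p²/(p-1) |x| y^{p-1}` for `|x| ≥ (p-1)y/p`. -/
theorem doob_minimal_fixed_point {X : Type*} [NormedAddCommGroup X] [NormedSpace ℝ X]
    [Nontrivial X] (p : ℝ) (hp : 1 < p)
    (f : {z : X × ℝ // ‖z.1‖ ≤ z.2} → EReal)
    (hf : ∀ z, f z = ((z.1.2 ^ p - (p / (p - 1)) ^ p * ‖z.1.1‖ ^ p : ℝ) : EReal)) :
    ∀ z : {z : X × ℝ // ‖z.1‖ ≤ z.2},
      (⨆ n : ℕ, (Aop (doobPhi X))^[n] f z) =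
        if ‖z.1.1‖ < (p - 1) * z.1.2 / p
        then ((z.1.2 ^ p - (p / (p - 1)) ^ p * ‖z.1.1‖ ^ p : ℝ) : EReal)
        else ((p * z.1.2 ^ p - p ^ 2 / (p - 1) * ‖z.1.1‖ * z.1.2 ^ (p - 1) : ℝ) : EReal) := by
  intro z
  have hpq : p.HolderConjugate (p / (p - 1)) := .conjExponent hp
  have hq := hpq.symm.pos
  have hpayoff (z : DoobState X) : z.1.2 ^ p - (p / (p - 1)) ^ p * ‖z.1.1‖ ^ p
      = doobPayoff p (p / (p - 1)) z := by
    rw [doobPayoff, Real.mul_rpow hq.le (norm_nonneg _)]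
  have hf' : f = fun z => (doobPayoff p (p / (p - 1)) z : EReal) :=
    funext fun z => by rw [hf, hpayoff]
  have hthreshold : (p - 1) * z.1.2 / p = z.1.2 / (p / (p - 1)) := by field_simp
  rw [hf', ← iSup_apply, iSup_iterate_Aop_doobPayoff hpq, hpayoff, hthreshold]
  beta_reduce
  split_ifs with hz
  · rw [doobValue_of_le ((lt_div_iff₀' hq).1 hz).le]
  · rw [doobValue_of_ge ((div_le_iff₀' hq).1 (not_lt.1 hz)),
      rpow_eq_mul_rpow_sub_one hpq.ne_zero (DoobState.snd_nonneg z)]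
    congr 1
    ring
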